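/- arXiv:1805.03566 — 2 statements merged into one kernel-verified Lean document; each statement's English description precedes it below -/
import Mathlib

section
/- Let ν be a lattice path with m east and n north steps and let T be a ν-tree. Then T contains: the top-left corner (0,n) of A_ν (called the root); every valley of ν (every lattice point of ν immediately preceded by an east step and immediately followed by a north step); the starting points of the initial north steps of ν; the ending points of the final east steps of ν; at least one point in each column of A_ν; and at least one point in each row of A_ν. Moreover, every point of T other than the root has either a point of T above it in the same column or a point of T to its left in the same row, but not both. -/
open scoped Classical

/-! Lattice paths: `true` = north step, `false` = east step. -/

def eastSteps (ν : List Bool) : ℕ := ν.count false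
def northSteps (ν : List Bool) : ℕ := ν.count true

/-- Height at which the path first reaches abscissa `x`. -/
def heightAt : List Bool → ℕ → ℕ
  | _, 0 => 0
  | [], _ + 1 => 0
  | true :: rest, x + 1 => heightAt rest (x + 1) + 1
  | false :: rest, x + 1 => heightAt rest x

/-- Lattice point of a path after `i` steps. -/
def pointAt (μ : List Bool) (i : ℕ) : ℕ × ℕ :=
  ((μ.take i).count false, (μ.take i).count true)

/-- The set `A_ν` of lattice points weakly above `ν`. -/
def APts (ν : List Bool) : Set (ℕ × ℕ) :=
  {p | p.1 ≤ eastSteps ν ∧ heightAt ν p.1 ≤ p.2 ∧ p.2 ≤ northSteps ν}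

def Incompatible (ν : List Bool) (p q : ℕ × ℕ) : Prop :=
  (p.1 < q.1 ∧ p.2 < q.2 ∧ (q.1, p.2) ∈ APts ν) ∨
    (q.1 < p.1 ∧ q.2 < p.2 ∧ (p.1, q.2) ∈ APts ν)

def Compatible (ν : List Bool) (p q : ℕ × ℕ) : Prop := ¬ Incompatible ν p q

def IsNuTree (ν : List Bool) (T : Set (ℕ × ℕ)) : Prop :=
  T ⊆ APts ν ∧ T.Pairwise (Compatible ν) ∧
    ∀ T', T' ⊆ APts ν → T'.Pairwise (Compatible ν) → T ⊆ T' → T' = T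

def IsRightRotationAt (T T' : Set (ℕ × ℕ)) (q q' : ℕ × ℕ) : Prop :=
  ∃ x y x'' y', q = (x, y) ∧ q' = (x'', y') ∧ x < x'' ∧ y < y' ∧
    (x, y) ∈ T ∧ (x, y') ∈ T ∧ (x'', y) ∈ T ∧
    (∀ b, y < b → b < y' → (x, b) ∉ T) ∧
    (∀ a, x < a → a < x'' → (a, y) ∉ T) ∧
    (∀ a, x < a → a < x'' → (a, y') ∉ T) ∧
    (∀ b, y < b → b < y' → (x'', b) ∉ T) ∧
    T' = (T \ {(x, y)}) ∪ {(x'', y')}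

def IsRightRotation (T T' : Set (ℕ × ℕ)) : Prop :=
  ∃ q q', IsRightRotationAt T T' q q'

/-- Order relation of the rotation poset of ν-trees. -/
def TreeLE (ν : List Bool) : Set (ℕ × ℕ) → Set (ℕ × ℕ) → Prop :=
  Relation.ReflTransGen fun A B => IsNuTree ν A ∧ IsNuTree ν B ∧ IsRightRotation A B

def IsNuPath (ν μ : List Bool) : Prop :=
  eastSteps μ = eastSteps ν ∧ northSteps μ = northSteps ν ∧
    ∀ i ≤ μ.length, pointAt μ i ∈ APts ν

noncomputable def horiz (ν : List Bool) (p : ℕ × ℕ) : ℕ :=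
  sSup {k | (p.1 + k, p.2) ∈ APts ν}

/-- Covering relation of the ν-Tamari lattice. -/
def TamariCover (ν μ μ' : List Bool) : Prop :=
  IsNuPath ν μ ∧ IsNuPath ν μ' ∧
    ∃ i j, 0 < i ∧ i < j ∧ j ≤ μ.length ∧
      μ.getD (i - 1) true = false ∧ μ.getD i false = true ∧
      horiz ν (pointAt μ j) = horiz ν (pointAt μ i) ∧
      (∀ k, i < k → k < j → horiz ν (pointAt μ k) ≠ horiz ν (pointAt μ i)) ∧
      μ' = μ.take (i - 1) ++ (μ.drop i).take (j - i) ++ [false] ++ μ.drop j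

def TamariLE (ν : List Bool) : List Bool → List Bool → Prop :=
  Relation.ReflTransGen (TamariCover ν)

/-! Flushing maps -/

def rowAvail (ν : List Bool) (y : ℕ) : List ℕ :=
  ((List.range (eastSteps ν + 1)).filter fun x => decide (heightAt ν x ≤ y)).reverse

def pointsAtHeight (μ : List Bool) (y : ℕ) : ℕ :=
  ((List.range (μ.length + 1)).filter fun i => decide ((μ.take i).count true = y)).length

def rflushAux (ν : List Bool) : List ℕ → ℕ → List ℕ → List (ℕ × ℕ)
  | [], _, _ => []
  | c :: rest, y, forbidden =>
    let placed := ((rowAvail ν y).filter fun x => decide (x ∉ forbidden)).take c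
    placed.map (fun x => (x, y)) ++ rflushAux ν rest (y + 1) (forbidden ++ placed.dropLast)

/-- Right-flushing map `R`. -/
def Rflush (ν μ : List Bool) : Set (ℕ × ℕ) :=
  {p | p ∈ rflushAux ν ((List.range (northSteps ν + 1)).map (pointsAtHeight μ)) 0 []}

def lflushAux (m : ℕ) : List ℕ → ℕ → List ℕ → List (ℕ × ℕ)
  | [], _, _ => []
  | c :: rest, y, forbidden =>
    let placed := ((List.range (m + 1)).filter fun x => decide (x ∉ forbidden)).take c
    placed.map (fun x => (x, y)) ++ lflushAux m rest (y + 1) (forbidden ++ placed.dropLast)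

noncomputable def rowCount (T : Set (ℕ × ℕ)) (y : ℕ) : ℕ := {x | (x, y) ∈ T}.ncard

/-- Left-flushing map `L`. -/
noncomputable def Lflush (ν : List Bool) (T : Set (ℕ × ℕ)) : Set (ℕ × ℕ) :=
  {p | p ∈ lflushAux (eastSteps ν) ((List.range (northSteps ν + 1)).map (rowCount T)) 0 []}

def pathPointSet (μ : List Bool) : Set (ℕ × ℕ) := {p | ∃ i ≤ μ.length, pointAt μ i = p}

/-! Bracket vectors (0-indexed positions `0,…,ℓ`). -/

noncomputable def fpos (ν : List Bool) (k : ℕ) : ℕ :=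
  sSup {i | i ≤ ν.length ∧ (ν.take i).count true = k}

def bmin (ν : List Bool) : List ℕ :=
  (List.range (ν.length + 1)).map fun i => (ν.take i).count true

def IsBracketVector (ν : List Bool) (b : List ℕ) : Prop :=
  b.length = ν.length + 1 ∧
    (∀ k ≤ northSteps ν, b.getD (fpos ν k) 0 = k) ∧
    (∀ i < b.length, (bmin ν).getD i 0 ≤ b.getD i 0 ∧ b.getD i 0 ≤ northSteps ν) ∧
    ∀ i j k, i < j → j < k → k < b.length →
      ¬(b.getD i 0 = b.getD k 0 ∧ b.getD i 0 < b.getD j 0)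

noncomputable def leftChild (T : Set (ℕ × ℕ)) (p : ℕ × ℕ) : Option (ℕ × ℕ) :=
  if ∃ b, (p.1, b) ∈ T ∧ b < p.2 then some (p.1, sSup {b | (p.1, b) ∈ T ∧ b < p.2})
  else none

noncomputable def rightChild (T : Set (ℕ × ℕ)) (p : ℕ × ℕ) : Option (ℕ × ℕ) :=
  if ∃ a, (a, p.2) ∈ T ∧ p.1 < a then
    if ∃ b, (sInf {a | (a, p.2) ∈ T ∧ p.1 < a}, b) ∈ T ∧ p.2 < b then none
    else some (sInf {a | (a, p.2) ∈ T ∧ p.1 < a}, p.2)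
  else none

noncomputable def inorderAux (T : Set (ℕ × ℕ)) : ℕ → ℕ × ℕ → List (ℕ × ℕ)
  | 0, _ => []
  | fuel + 1, p =>
    (match leftChild T p with
      | none => []
      | some l => inorderAux T fuel l) ++ p ::
      (match rightChild T p with
        | none => []
        | some r => inorderAux T fuel r)

/-- Bracket vector of a ν-tree: y-coordinates read in in-order from the root `(0,n)`. -/
noncomputable def bracketOfTree (ν : List Bool) (T : Set (ℕ × ℕ)) : List ℕ :=
  (inorderAux T T.ncard (0, northSteps ν)).map Prod.snd

noncomputable def bracketAssign (ν μ : List Bool) : List (ℕ × ℕ) :=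
  ((List.range (northSteps ν + 1)).foldl
    (fun (st : List (ℕ × ℕ) × List ℕ) k =>
      let picked := ((st.2.filter fun i => decide (i ≤ fpos ν k)).reverse).take
        (pointsAtHeight μ k)
      (st.1 ++ picked.map fun i => (i, k), st.2.filter fun i => decide (i ∉ picked)))
    ([], List.range (ν.length + 1))).1

/-- Bracket vector of a ν-path. -/
noncomputable def bracketOfPath (ν μ : List Bool) : List ℕ :=
  (List.range (ν.length + 1)).map fun i => ((bracketAssign ν μ).lookup i).getD 0

/-- Componentwise order on (equal length) integer vectors. -/
def listLE (b b' : List ℕ) : Prop :=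
  b.length = b'.length ∧ ∀ i, b.getD i 0 ≤ b'.getD i 0

/-! Reversal -/

def revPath (ν : List Bool) : List Bool := ν.reverse.map fun s => !s

def revTree (ν : List Bool) (T : Set (ℕ × ℕ)) : Set (ℕ × ℕ) :=
  (fun p : ℕ × ℕ => (northSteps ν - p.2, eastSteps ν - p.1)) '' T

/-! Pipe dreams and subword complexes -/

def dOf (ν : List Bool) (p : ℕ × ℕ) : ℕ := p.1 + (northSteps ν - p.2)

def labelPerm (ν : List Bool) (p : ℕ × ℕ) : Equiv.Perm ℕ :=
  Equiv.swap (dOf ν p + 1) (dOf ν p + 2)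

/-- The points of `A_ν` in reading order: rows from bottom to top, each left to right. -/
def readingList (ν : List Bool) : List (ℕ × ℕ) :=
  ((List.range (northSteps ν + 1)).map fun y =>
    ((List.range (eastSteps ν + 1)).filter fun x => decide (heightAt ν x ≤ y)).map
      fun x => (x, y)).flatten

/-- The minimal ν-tree. -/
def TminSet (ν : List Bool) : Set (ℕ × ℕ) :=
  {p | p ∈ APts ν ∧ (p.1 = 0 ∨ ∃ i < ν.length, ν.getD i true = false ∧ p = pointAt ν (i + 1))}

noncomputable def prodOver (ν : List Bool) (C : Set (ℕ × ℕ)) : Equiv.Perm ℕ :=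
  (((readingList ν).filter fun p => decide (p ∈ C)).map (labelPerm ν)).prod

/-- Coxeter length: number of inversions. -/
noncomputable def lenInv (π : Equiv.Perm ℕ) : ℕ :=
  {q : ℕ × ℕ | q.1 < q.2 ∧ π q.2 < π q.1}.ncard

noncomputable def piNu (ν : List Bool) : Equiv.Perm ℕ := prodOver ν (APts ν \ TminSet ν)

def Qword (ν : List Bool) : List (Equiv.Perm ℕ) := (readingList ν).map (labelPerm ν)

noncomputable def prodAt (Q : List (Equiv.Perm ℕ)) (P : Finset ℕ) : Equiv.Perm ℕ :=
  (((List.range Q.length).filter fun i => decide (i ∈ P)).map fun i => Q.getD i 1).prod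

def IsFacet (Q : List (Equiv.Perm ℕ)) (π : Equiv.Perm ℕ) (I : Finset ℕ) : Prop :=
  I ⊆ Finset.range Q.length ∧
    prodAt Q (Finset.range Q.length \ I) = π ∧
    (Finset.range Q.length \ I).card = lenInv π

def IncFlip (Q : List (Equiv.Perm ℕ)) (π : Equiv.Perm ℕ) (I J : Finset ℕ) : Prop :=
  IsFacet Q π I ∧ IsFacet Q π J ∧ ∃ i ∈ I, ∃ j ∈ J, i < j ∧ I.erase i = J.erase j

def FlipLE (Q : List (Equiv.Perm ℕ)) (π : Equiv.Perm ℕ) : Finset ℕ → Finset ℕ → Prop :=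
  Relation.ReflTransGen (IncFlip Q π)

/-- The maximal ν-tree. -/
def TmaxSet (ν : List Bool) : Set (ℕ × ℕ) :=
  {p | (p.1 ≤ eastSteps ν ∧ p.2 = northSteps ν) ∨ ∃ i < ν.length, ν.getD i false = true ∧ p = pointAt ν i}

/-!
The root, the valleys, the initial north points and the final east points are compatible with
*all* of `A_ν`, so maximality puts them into every `ν`-tree.

For the columns, among the rows at or above a given point that contain a tree point to the left of
its column, take the lowest one: its intersection with the column is compatible with the tree.
Started at the bottom of a column this finds a tree point in it, and started at a tree point it
finds a parent. For the rows, symmetrically, take the rightmost column meeting the given row in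
`A_ν` that has a tree point above that row. A parent above and a parent to the left of the same
point would be incompatible with each other.
-/

section ListLemmas

variable {α : Type*} {l : List α} {a b : α} {k : ℕ}

theorem exists_eq_append_cons_cons (ha : l[k]? = some a) (hb : l[k + 1]? = some b) :
    ∃ s t, l = s ++ a :: b :: t ∧ s.length = k := by
  obtain ⟨hk, rfl⟩ := List.getElem?_eq_some_iff.mp ha
  obtain ⟨hk', rfl⟩ := List.getElem?_eq_some_iff.mp hb
  refine ⟨l.take k, l.drop (k + 2), ?_, List.length_take_of_le hk.le⟩
  rw [← List.drop_eq_getElem_cons hk', ← List.drop_eq_getElem_cons hk, List.take_append_drop]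

theorem replicate_prefix_of_le_length_takeWhile {p : α → Bool} (hp : ∀ c, p c → c = a)
    (hk : k ≤ (l.takeWhile p).length) : List.replicate k a <+: l := by
  have htake : (l.takeWhile p).take k = List.replicate k a :=
    List.eq_replicate_iff.mpr ⟨List.length_take_of_le hk, fun c hc =>
      hp c (List.mem_takeWhile_imp (List.mem_of_mem_take hc))⟩
  exact htake ▸ (List.take_prefix k _).trans (List.takeWhile_prefix p)

end ListLemmas

theorem heightAt_zero (ν : List Bool) : heightAt ν 0 = 0 := by
  cases ν <;> rfl

theorem heightAt_le_northSteps (ν : List Bool) (x : ℕ) : heightAt ν x ≤ northSteps ν := by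
  induction ν generalizing x with
  | nil => cases x <;> simp [heightAt]
  | cons s ν ih =>
    cases x with
    | zero => simp [heightAt]
    | succ x => cases s <;> simpa [heightAt, northSteps] using ih _

theorem monotone_heightAt (ν : List Bool) : Monotone (heightAt ν) := by
  refine monotone_nat_of_le_succ fun x => ?_
  induction ν generalizing x with
  | nil => cases x <;> simp [heightAt]
  | cons s ν ih =>
    cases x with
    | zero => simp [heightAt]
    | succ x => cases s <;> simpa [heightAt] using ih _

theorem heightAt_append_count_add_succ (μ ρ : List Bool) (x : ℕ) :
    heightAt (μ ++ ρ) (μ.count false + (x + 1)) = μ.count true + heightAt ρ (x + 1) := by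
  induction μ with
  | nil => simp
  | cons s μ ih =>
    cases s <;>
      rw [List.count_cons_self, List.count_cons_of_ne (by decide), add_right_comm, ← ih] <;> rfl

instance (ν : List Bool) : Std.Symm (Compatible ν) :=
  ⟨fun _ _ h h' => h h'.symm⟩

/-- A point of `A_ν` is forced if it is compatible with every point of `A_ν`. By maximality, a
forced point lies in every `ν`-tree. -/
def IsForced (ν : List Bool) (p : ℕ × ℕ) : Prop :=
  p ∈ APts ν ∧ ∀ q ∈ APts ν, Compatible ν p q

section Forced

variable {ν : List Bool} {i j : ℕ}

theorem isForced_of_corner {x y : ℕ} (hxy : (x, y) ∈ APts ν)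
    (hleft : x = 0 ∨ y ≤ heightAt ν x) (htop : y = northSteps ν ∨ y < heightAt ν (x + 1)) :
    IsForced ν (x, y) := by
  refine ⟨hxy, ?_⟩
  rintro ⟨c, d⟩ ⟨-, -, hd⟩ (⟨hxc, hyd, -, hc, -⟩ | ⟨hcx, hdy, -, hx, -⟩)
  · rcases htop with rfl | hy
    · exact hd.not_gt hyd
    · exact (hy.trans_le (monotone_heightAt ν hxc)).not_ge hc
  · rcases hleft with rfl | hy
    · exact Nat.not_lt_zero c hcx
    · exact (hdy.trans_le hy).not_ge hx

theorem isForced_root (ν : List Bool) : IsForced ν (0, northSteps ν) :=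
  isForced_of_corner ⟨Nat.zero_le _, heightAt_le_northSteps ν 0, le_rfl⟩ (.inl rfl) (.inl rfl)

theorem isForced_valley (hi : 0 < i) (heast : ν.getD (i - 1) true = false)
    (hnorth : ν.getD i false = true) : IsForced ν (pointAt ν i) := by
  obtain ⟨k, rfl⟩ := Nat.exists_eq_succ_of_ne_zero hi.ne'
  obtain ⟨μ, ρ, rfl, rfl⟩ : ∃ μ ρ, ν = μ ++ false :: true :: ρ ∧ μ.length = k :=
    exists_eq_append_cons_cons (by simpa [Option.getD_eq_iff] using heast)
      (by simpa [Option.getD_eq_iff] using hnorth)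
  set ν := μ ++ false :: true :: ρ with hν
  have hpoint : pointAt ν (μ.length + 1) = (μ.count false + 1, μ.count true) := by
    simp [hν, pointAt, List.take_append, List.take_of_length_le]
  have hheight : heightAt ν (μ.count false + 1) = μ.count true :=
    heightAt_append_count_add_succ μ (false :: true :: ρ) 0
  have hnext : heightAt ν (μ.count false + 1 + 1) = μ.count true + (heightAt ρ 1 + 1) :=
    heightAt_append_count_add_succ μ (false :: true :: ρ) 1
  rw [Nat.succ_eq_add_one, hpoint]
  refine isForced_of_corner ⟨?_, hheight.le, ?_⟩ (.inr hheight.ge) (.inr ?_)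
  · simp [hν, eastSteps]
  · simp [hν, northSteps]
  · omega

theorem isForced_of_initial_north (h : List.replicate (j + 1) true <+: ν) :
    IsForced ν (0, j) := by
  obtain ⟨ρ, rfl⟩ := h
  have hheight : heightAt (List.replicate (j + 1) true ++ ρ) 1 = j + 1 + heightAt ρ 1 := by
    simpa [List.count_replicate] using
      heightAt_append_count_add_succ (List.replicate (j + 1) true) ρ 0
  refine isForced_of_corner ⟨Nat.zero_le _, (heightAt_zero _).trans_le j.zero_le, ?_⟩
    (.inl rfl) (.inr ?_)
  · simp only [northSteps, List.count_append, List.count_replicate_self]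
    omega
  · rw [zero_add, hheight]
    omega

theorem isForced_of_final_east (h : List.replicate (j + 1) false <:+ ν) :
    IsForced ν (eastSteps ν - j, northSteps ν) := by
  obtain ⟨μ, rfl⟩ := h
  set ν := μ ++ List.replicate (j + 1) false with hν
  have hx : eastSteps ν - j = μ.count false + 1 := by
    simp only [hν, eastSteps, List.count_append, List.count_replicate_self]
    omega
  have hy : northSteps ν = μ.count true := by
    simp [hν, northSteps, List.count_replicate]
  have hheight : northSteps ν ≤ heightAt ν (eastSteps ν - j) := by
    rw [hx, hy, heightAt_append_count_add_succ μ (List.replicate (j + 1) false) 0]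
    exact Nat.le_add_right _ _
  exact isForced_of_corner ⟨Nat.sub_le _ _, heightAt_le_northSteps ν _, le_rfl⟩
    (.inr hheight) (.inl rfl)

end Forced

namespace IsNuTree

variable {ν : List Bool} {T : Set (ℕ × ℕ)} {x y : ℕ}

theorem mem_of_forall_compatible (hT : IsNuTree ν T) {p : ℕ × ℕ} (hp : p ∈ APts ν)
    (h : ∀ q ∈ T, Compatible ν p q) : p ∈ T := by
  have hinsert : insert p T = T := hT.2.2 _ (Set.insert_subset hp hT.1)
    (hT.2.1.insert_of_symm fun q hq _ => h q hq) (Set.subset_insert p T)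
  exact hinsert ▸ Set.mem_insert p T

theorem mem_of_isForced (hT : IsNuTree ν T) {p : ℕ × ℕ} (hp : IsForced ν p) : p ∈ T :=
  hT.mem_of_forall_compatible hp.1 fun q hq => hp.2 q (hT.1 hq)

theorem corner_notMem_APts (hT : IsNuTree ν T) {a b : ℕ} (hay : (a, y) ∈ T) (hxb : (x, b) ∈ T)
    (hax : a < x) (hyb : y < b) : (x, y) ∉ APts ν := fun hxy =>
  hT.2.1 hay hxb (fun h => hax.ne (congrArg Prod.fst h)) (.inl ⟨hax, hyb, hxy⟩)

theorem exists_ge_mem_column_and_left (hT : IsNuTree ν T) (hx : 0 < x) (hxy : (x, y) ∈ APts ν)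
    (hfree : ∀ a < x, ∀ b < y, (a, b) ∈ T → (x, b) ∉ APts ν) :
    ∃ b ≥ y, (x, b) ∈ T ∧ ∃ a < x, (a, b) ∈ T := by
  obtain ⟨b, ⟨hyb, a, hax, hab⟩, hmin⟩ :
      ∃ b, IsLeast {b | y ≤ b ∧ ∃ a < x, (a, b) ∈ T} b :=
    ⟨_, isLeast_csInf ⟨northSteps ν, hxy.2.2, 0, hx, hT.mem_of_isForced (isForced_root ν)⟩⟩
  refine ⟨b, hyb, hT.mem_of_forall_compatible ?_ ?_, a, hax, hab⟩
  · exact ⟨hxy.1, hxy.2.1.trans hyb, (hT.1 hab).2.2⟩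
  · rintro ⟨c, d⟩ hcd (⟨hxc, hbd, hcb⟩ | ⟨hcx, hdb, hxd⟩)
    · exact hT.corner_notMem_APts hab hcd (hax.trans hxc) hbd hcb
    · rcases lt_or_ge d y with hdy | hyd
      · exact hfree c hcx d hdy hcd hxd
      · exact hdb.not_ge (hmin ⟨hyd, c, hcx, hcd⟩)

theorem exists_mem_column (hT : IsNuTree ν T) (hx : x ≤ eastSteps ν) : ∃ y, (x, y) ∈ T := by
  rcases x.eq_zero_or_pos with rfl | hpos
  · exact ⟨_, hT.mem_of_isForced (isForced_root ν)⟩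
  · obtain ⟨y, -, hy, -⟩ := hT.exists_ge_mem_column_and_left hpos
      ⟨hx, le_rfl, heightAt_le_northSteps ν x⟩ fun _ _ _ hb _ hxb => hb.not_ge hxb.2.1
    exact ⟨y, hy⟩

theorem exists_mem_row (hT : IsNuTree ν T) (hy : y ≤ northSteps ν) : ∃ x, (x, y) ∈ T := by
  have hroot := hT.mem_of_isForced (isForced_root ν)
  rcases hy.eq_or_lt with rfl | hlt
  · exact ⟨0, hroot⟩
  obtain ⟨x, ⟨hxy, b, hyb, hxb⟩, hmax⟩ :
      ∃ x, IsGreatest {x | (x, y) ∈ APts ν ∧ ∃ b > y, (x, b) ∈ T} x :=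
    BddAbove.exists_isGreatest_of_nonempty ⟨eastSteps ν, fun _ hx => hx.1.1⟩
      ⟨0, ⟨Nat.zero_le _, (heightAt_zero ν).trans_le y.zero_le, hy⟩, _, hlt, hroot⟩
  refine ⟨x, hT.mem_of_forall_compatible hxy ?_⟩
  rintro ⟨c, d⟩ hcd (⟨hxc, hyd, hcy⟩ | ⟨hcx, hdy, hxd⟩)
  · exact hxc.not_ge (hmax ⟨hcy, d, hyd, hcd⟩)
  · exact hT.corner_notMem_APts hcd hxb hcx (hdy.trans hyb) hxd

theorem exists_above_or_exists_left (hT : IsNuTree ν T) (hxy : (x, y) ∈ T)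
    (hne : (x, y) ≠ (0, northSteps ν)) : (∃ b, y < b ∧ (x, b) ∈ T) ∨ ∃ a, a < x ∧ (a, y) ∈ T := by
  rcases x.eq_zero_or_pos with rfl | hpos
  · have hy : y ≠ northSteps ν := fun h => hne (congrArg (Prod.mk 0) h)
    exact .inl ⟨_, (hT.1 hxy).2.2.lt_of_ne hy, hT.mem_of_isForced (isForced_root ν)⟩
  · obtain ⟨b, hyb, hxb, hleft⟩ := hT.exists_ge_mem_column_and_left hpos (hT.1 hxy)
      fun a hax b hby hab => hT.corner_notMem_APts hab hxy hax hby
    rcases hyb.eq_or_lt with rfl | hlt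
    · exact .inr hleft
    · exact .inl ⟨b, hlt, hxb⟩

theorem xor_above_left (hT : IsNuTree ν T) (hxy : (x, y) ∈ T) (hne : (x, y) ≠ (0, northSteps ν)) :
    Xor (∃ b, y < b ∧ (x, b) ∈ T) (∃ a, a < x ∧ (a, y) ∈ T) := by
  refine (xor_iff_or_and_not_and _ _).mpr ⟨hT.exists_above_or_exists_left hxy hne, ?_⟩
  rintro ⟨⟨b, hyb, hxb⟩, a, hax, hay⟩
  exact hT.corner_notMem_APts hay hxb hax hyb (hT.1 hxy)

end IsNuTree

theorem nuTree_structural_properties (ν : List Bool) (T : Set (ℕ × ℕ))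
    (hT : IsNuTree ν T) :
    (0, northSteps ν) ∈ T ∧
    (∀ i, 0 < i → i < ν.length → ν.getD (i - 1) true = false → ν.getD i false = true →
      pointAt ν i ∈ T) ∧
    (∀ j, j < (ν.takeWhile (fun s => s)).length → (0, j) ∈ T) ∧
    (∀ j, j < (ν.reverse.takeWhile (fun s => !s)).length →
      (eastSteps ν - j, northSteps ν) ∈ T) ∧
    (∀ x ≤ eastSteps ν, ∃ y, (x, y) ∈ T) ∧
    (∀ y ≤ northSteps ν, ∃ x, (x, y) ∈ T) ∧
    (∀ p ∈ T, p ≠ (0, northSteps ν) →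
      Xor' (∃ b, p.2 < b ∧ (p.1, b) ∈ T) (∃ a, a < p.1 ∧ (a, p.2) ∈ T)) := by
  refine ⟨hT.mem_of_isForced (isForced_root ν), ?valleys, ?initialNorth, ?finalEast,
    fun _ hx => hT.exists_mem_column hx, fun _ hy => hT.exists_mem_row hy,
    fun _ hp hne => hT.xor_above_left hp hne⟩
  case valleys =>
    exact fun _ hi _ heast hnorth => hT.mem_of_isForced (isForced_valley hi heast hnorth)
  case initialNorth =>
    intro j hj
    have hprefix : List.replicate (j + 1) true <+: ν :=
      replicate_prefix_of_le_length_takeWhile (fun _ h => h) hj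
    exact hT.mem_of_isForced (isForced_of_initial_north hprefix)
  case finalEast =>
    intro j hj
    have hprefix : List.replicate (j + 1) false <+: ν.reverse :=
      replicate_prefix_of_le_length_takeWhile (by simp) hj
    have hsuffix : List.replicate (j + 1) false <:+ ν := by
      simpa using List.reverse_suffix.mpr hprefix
    exact hT.mem_of_isForced (isForced_of_final_east hsuffix)
end

section
/- Let ν be a lattice path with m east and n north steps. A subset T ⊆ A_ν is a ν-tree if and only if it satisfies the following four conditions (i.e., T is a non-crossing tree-like tableau, translated to lattice points): (i) (0,n) ∈ T; (ii) every point of T other than (0,n) has either a point of T above it in the same column or a point of T to its left in the same row, but not both; (iii) every row and every column of A_ν contains at least one point of T; (iv) T is non-crossing: no point of A_ν not in T has both a point of T above it in the same column and a point of T to its left in the same row. -/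
open scoped Classical

/-!
Only a few features of `A_ν` matter: it is finite, lies weakly right of its left column and weakly
below its top row, and every row (column) meets the left column (top row). In such a region with
top-left corner `(o, t)`, pairwise compatibility of `T` says that no point of the region has both a
point of `T` above it and one to its left.

The bridge between maximality and the parent condition is that each row below the top contains a
point of `T` with another one above it, and each column right of the first a point of `T` with
another one to its left. For a maximal `T`, such a point of a given row is the rightmost point of
the region lying below a point of `T`; for a tree-like tableau it is the leftmost point of `T` in
the row, whose parent can only be above. Conversely, a point `p` compatible with all of `T` cannot
lie left of the point of `T` provided by its row nor above the one provided by its column, so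
outside `T` it would be a crossing.
-/

section Region

variable {α β : Type*} [LinearOrder α] [LinearOrder β] {A T : Set (α × β)} {o : α} {t : β}

/-- `ν`-compatibility, with an arbitrary region `A` of a product of linear orders in place of
`A_ν`. -/
def CompatibleIn (A : Set (α × β)) (p q : α × β) : Prop :=
  ¬((p.1 < q.1 ∧ p.2 < q.2 ∧ (q.1, p.2) ∈ A) ∨ (q.1 < p.1 ∧ q.2 < p.2 ∧ (p.1, q.2) ∈ A))

/-- The analogue of a `ν`-tree in a region `A`: a maximal set of pairwise compatible points. -/
def IsRegionTree (A T : Set (α × β)) : Prop :=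
  Maximal (fun S => S ⊆ A ∧ S.Pairwise (CompatibleIn A)) T

/-- The point `p`, which need not belong to `T`, has a point of `T` above it in its column. -/
def HasPointAbove (T : Set (α × β)) (p : α × β) : Prop := ∃ b, p.2 < b ∧ (p.1, b) ∈ T

/-- The point `p`, which need not belong to `T`, has a point of `T` to its left in its row. -/
def HasPointLeft (T : Set (α × β)) (p : α × β) : Prop := ∃ a, a < p.1 ∧ (a, p.2) ∈ T

/-- The non-crossing condition, imposed on all points of `A`: on the points of `T` it is the
exclusivity half of the tree-like condition. -/
def IsNoncrossing (A T : Set (α × β)) : Prop :=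
  ∀ p ∈ A, ¬(HasPointAbove T p ∧ HasPointLeft T p)

/-- The shape of region to which the characterization of `ν`-trees extends: finite, with top-left
corner `(o, t)`, and with rows indexed by its left column and columns by its top row. -/
structure IsRootedRegion (A : Set (α × β)) (o : α) (t : β) : Prop where
  finite : A.Finite
  root_mem : (o, t) ∈ A
  left_le : ∀ p ∈ A, o ≤ p.1
  le_top : ∀ p ∈ A, p.2 ≤ t
  left_mem : ∀ p ∈ A, (o, p.2) ∈ A
  top_mem : ∀ p ∈ A, (p.1, t) ∈ A

/-- The connectedness property linking trees to tree-like tableaux: `T` contains the root `(o, t)`,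
every row other than the top one has a point of `T` below another one, and every column other than
the left one has a point of `T` to the right of another one. -/
structure IsSpanning (A T : Set (α × β)) (o : α) (t : β) : Prop where
  root_mem : (o, t) ∈ T
  exists_row : ∀ y, (o, y) ∈ A → y ≠ t → ∃ x, (x, y) ∈ T ∧ HasPointAbove T (x, y)
  exists_column : ∀ x, (x, t) ∈ A → x ≠ o → ∃ y, (x, y) ∈ T ∧ HasPointLeft T (x, y)

theorem CompatibleIn.symm {p q : α × β} (h : CompatibleIn A p q) : CompatibleIn A q p :=
  fun hqp => h hqp.symm

theorem pairwise_compatibleIn_iff_isNoncrossing :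
    T.Pairwise (CompatibleIn A) ↔ IsNoncrossing A T := by
  constructor
  · rintro h ⟨x, y⟩ hp ⟨⟨b, hyb, hb⟩, ⟨a, hax, ha⟩⟩
    exact h ha hb (fun hab => hax.ne (congrArg Prod.fst hab)) (Or.inl ⟨hax, hyb, hp⟩)
  · rintro h p hp q hq - (⟨hx, hy, hA⟩ | ⟨hx, hy, hA⟩)
    · exact h _ hA ⟨⟨q.2, hy, hq⟩, ⟨p.1, hx, hp⟩⟩
    · exact h _ hA ⟨⟨p.2, hy, hp⟩, ⟨q.1, hx, hq⟩⟩

theorem isRegionTree_iff_forall_mem :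
    IsRegionTree A T ↔ T ⊆ A ∧ IsNoncrossing A T ∧
      ∀ p ∈ A, (∀ q ∈ T, CompatibleIn A p q) → p ∈ T := by
  rw [← pairwise_compatibleIn_iff_isNoncrossing]
  constructor
  · intro h
    refine ⟨h.prop.1, h.prop.2, fun p hp hpT => h.mem_of_prop_insert ?_⟩
    exact ⟨Set.insert_subset hp h.prop.1, h.prop.2.insert fun q hq _ =>
      ⟨hpT q hq, (hpT q hq).symm⟩⟩
  · rintro ⟨hsub, hT, hmem⟩
    refine ⟨⟨hsub, hT⟩, fun S hS hTS p hp => ?_⟩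
    by_contra hpT
    exact hpT <| hmem p (hS.1 hp) fun q hq =>
      hS.2 hp (hTS hq) fun hpq => hpT (hpq ▸ hq)

namespace IsRegionTree

theorem subset (hT : IsRegionTree A T) : T ⊆ A := hT.prop.1

theorem isNoncrossing (hT : IsRegionTree A T) : IsNoncrossing A T :=
  pairwise_compatibleIn_iff_isNoncrossing.1 hT.prop.2

theorem mem_of_forall_compatibleIn (hT : IsRegionTree A T) {p : α × β} (hp : p ∈ A)
    (hpT : ∀ q ∈ T, CompatibleIn A p q) : p ∈ T :=
  (isRegionTree_iff_forall_mem.1 hT).2.2 p hp hpT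

theorem root_mem (hT : IsRegionTree A T) (hA : IsRootedRegion A o t) : (o, t) ∈ T := by
  refine hT.mem_of_forall_compatibleIn hA.root_mem fun q hq => ?_
  rintro (⟨-, hy, -⟩ | ⟨hx, -, -⟩)
  · exact (hA.le_top q (hT.subset hq)).not_gt hy
  · exact (hA.left_le q (hT.subset hq)).not_gt hx

theorem exists_mem_hasPointAbove (hT : IsRegionTree A T) (hA : A.Finite) {x₀ : α} {y : β}
    (hx₀ : (x₀, y) ∈ A) (habove : HasPointAbove T (x₀, y)) :
    ∃ x, (x, y) ∈ T ∧ HasPointAbove T (x, y) := by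
  have hfin : {x | (x, y) ∈ A ∧ HasPointAbove T (x, y)}.Finite :=
    (hA.image Prod.fst).subset fun x hx => ⟨(x, y), hx.1, rfl⟩
  obtain ⟨x, ⟨hxA, hx⟩, hmax⟩ := Set.exists_max_image _ id hfin ⟨x₀, hx₀, habove⟩
  refine ⟨x, hT.mem_of_forall_compatibleIn hxA ?_, hx⟩
  rintro ⟨c, d⟩ hcd (⟨hxc, hyd, hcA⟩ | ⟨hcx, hdy, hdA⟩)
  · exact (hmax c ⟨hcA, d, hyd, hcd⟩).not_gt hxc
  · obtain ⟨b, hyb, hb⟩ := hx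
    exact hT.isNoncrossing _ hdA ⟨⟨b, hdy.trans hyb, hb⟩, ⟨c, hcx, hcd⟩⟩

theorem exists_mem_hasPointLeft (hT : IsRegionTree A T) (hA : A.Finite) {x : α} {y₀ : β}
    (hy₀ : (x, y₀) ∈ A) (hleft : HasPointLeft T (x, y₀)) :
    ∃ y, (x, y) ∈ T ∧ HasPointLeft T (x, y) := by
  have hfin : {y | (x, y) ∈ A ∧ HasPointLeft T (x, y)}.Finite :=
    (hA.image Prod.snd).subset fun y hy => ⟨(x, y), hy.1, rfl⟩
  obtain ⟨y, ⟨hyA, hy⟩, hmin⟩ := Set.exists_min_image _ id hfin ⟨y₀, hy₀, hleft⟩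
  refine ⟨y, hT.mem_of_forall_compatibleIn hyA ?_, hy⟩
  rintro ⟨c, d⟩ hcd (⟨hxc, hyd, hcA⟩ | ⟨hcx, hdy, hdA⟩)
  · obtain ⟨a, hax, ha⟩ := hy
    exact hT.isNoncrossing _ hcA ⟨⟨d, hyd, hcd⟩, ⟨a, hax.trans hxc, ha⟩⟩
  · exact (hmin d ⟨hdA, c, hcx, hcd⟩).not_gt hdy

theorem isSpanning (hT : IsRegionTree A T) (hA : IsRootedRegion A o t) : IsSpanning A T o t where
  root_mem := hT.root_mem hA
  exists_row _ hy hyt := hT.exists_mem_hasPointAbove hA.finite hy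
    ⟨t, (hA.le_top _ hy).lt_of_ne hyt, hT.root_mem hA⟩
  exists_column _ hx hxo := hT.exists_mem_hasPointLeft hA.finite hx
    ⟨o, (hA.left_le _ hx).lt_of_ne' hxo, hT.root_mem hA⟩

end IsRegionTree

namespace IsSpanning

theorem hasPointLeft_of_forall_compatibleIn (hS : IsSpanning A T o t) (hA : IsRootedRegion A o t)
    (hsub : T ⊆ A) {p : α × β} (hp : p ∈ A) (hpT : ∀ q ∈ T, CompatibleIn A p q) (hnot : p ∉ T)
    (hpt : p.2 ≠ t) : HasPointLeft T p := by
  obtain ⟨x, hx, b, hb, hbT⟩ := hS.exists_row p.2 (hA.left_mem p hp) hpt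
  have hpx : ¬p.1 < x := fun h => hpT _ hbT (Or.inl ⟨h, hb, hsub hx⟩)
  have hne : x ≠ p.1 := by
    rintro rfl
    exact hnot hx
  exact ⟨x, (not_lt.1 hpx).lt_of_ne hne, hx⟩

theorem hasPointAbove_of_forall_compatibleIn (hS : IsSpanning A T o t) (hA : IsRootedRegion A o t)
    (hsub : T ⊆ A) {p : α × β} (hp : p ∈ A) (hpT : ∀ q ∈ T, CompatibleIn A p q) (hnot : p ∉ T)
    (hpo : p.1 ≠ o) : HasPointAbove T p := by
  obtain ⟨y, hy, a, ha, haT⟩ := hS.exists_column p.1 (hA.top_mem p hp) hpo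
  have hyp : ¬y < p.2 := fun h => hpT _ haT (Or.inr ⟨ha, h, hsub hy⟩)
  have hne : y ≠ p.2 := by
    rintro rfl
    exact hnot hy
  exact ⟨y, (not_lt.1 hyp).lt_of_ne' hne, hy⟩

theorem isRegionTree (hS : IsSpanning A T o t) (hA : IsRootedRegion A o t) (hsub : T ⊆ A)
    (hT : IsNoncrossing A T) : IsRegionTree A T := by
  refine isRegionTree_iff_forall_mem.2 ⟨hsub, hT, fun p hp hpT => ?_⟩
  by_contra hnot
  have hleft := hS.hasPointLeft_of_forall_compatibleIn hA hsub hp hpT hnot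
  have habove := hS.hasPointAbove_of_forall_compatibleIn hA hsub hp hpT hnot
  by_cases hpt : p.2 = t
  · by_cases hpo : p.1 = o
    · exact hnot <| (Prod.ext hpo hpt : p = (o, t)) ▸ hS.root_mem
    · obtain ⟨b, hb, hbT⟩ := habove hpo
      exact (hA.le_top _ (hsub hbT)).not_gt (hpt ▸ hb)
  · obtain ⟨a, ha, haT⟩ := hleft hpt
    have hpo : p.1 ≠ o := fun h => (hA.left_le _ (hsub haT)).not_gt (h ▸ ha)
    exact hT p hp ⟨habove hpo, hleft hpt⟩

theorem hasPointAbove_or_hasPointLeft (hS : IsSpanning A T o t) (hA : IsRootedRegion A o t)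
    (hsub : T ⊆ A) (hT : IsNoncrossing A T) {p : α × β} (hp : p ∈ T) (hne : p ≠ (o, t)) :
    HasPointAbove T p ∨ HasPointLeft T p := by
  by_cases hpt : p.2 = t
  · have hpo : p.1 ≠ o := fun hpo => hne (Prod.ext hpo hpt)
    exact Or.inr ⟨o, (hA.left_le p (hsub hp)).lt_of_ne' hpo, hpt ▸ hS.root_mem⟩
  · obtain ⟨x, hx, hxabove⟩ := hS.exists_row p.2 (hA.left_mem p (hsub hp)) hpt
    rcases lt_trichotomy x p.1 with hxp | rfl | hpx
    · exact Or.inr ⟨x, hxp, hx⟩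
    · exact Or.inl hxabove
    · exact absurd ⟨hxabove, p.1, hpx, hp⟩ (hT _ (hsub hx))

theorem of_hasPointAbove_or_hasPointLeft (hfin : T.Finite) (hroot : (o, t) ∈ T)
    (hparent : ∀ p ∈ T, p ≠ (o, t) → HasPointAbove T p ∨ HasPointLeft T p)
    (hrow : ∀ y, (o, y) ∈ A → ∃ x, (x, y) ∈ T) (hcol : ∀ x, (x, t) ∈ A → ∃ y, (x, y) ∈ T) :
    IsSpanning A T o t where
  root_mem := hroot
  exists_row y hy hyt := by
    have hrowfin : {x | (x, y) ∈ T}.Finite :=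
      (hfin.image Prod.fst).subset fun x hx => ⟨(x, y), hx, rfl⟩
    obtain ⟨x, hx, hmin⟩ := Set.exists_min_image _ id hrowfin (hrow y hy)
    refine ⟨x, hx, (hparent _ hx fun h => hyt (congrArg Prod.snd h)).resolve_right ?_⟩
    rintro ⟨a, hax, ha⟩
    exact (hmin a ha).not_gt hax
  exists_column x hx hxo := by
    have hcolfin : {y | (x, y) ∈ T}.Finite :=
      (hfin.image Prod.snd).subset fun y hy => ⟨(x, y), hy, rfl⟩
    obtain ⟨y, hy, hmax⟩ := Set.exists_max_image _ id hcolfin (hcol x hx)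
    refine ⟨y, hy, (hparent _ hy fun h => hxo (congrArg Prod.fst h)).resolve_left ?_⟩
    rintro ⟨b, hyb, hb⟩
    exact (hmax b hb).not_gt hyb

theorem exists_mem_row (hS : IsSpanning A T o t) {y : β} (hy : (o, y) ∈ A) : ∃ x, (x, y) ∈ T := by
  by_cases hyt : y = t
  · exact ⟨o, hyt ▸ hS.root_mem⟩
  · exact (hS.exists_row y hy hyt).imp fun _ => And.left

theorem exists_mem_column (hS : IsSpanning A T o t) {x : α} (hx : (x, t) ∈ A) :
    ∃ y, (x, y) ∈ T := by
  by_cases hxo : x = o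
  · exact ⟨t, hxo ▸ hS.root_mem⟩
  · exact (hS.exists_column x hx hxo).imp fun _ => And.left

end IsSpanning

theorem IsNoncrossing.of_xor (hA : IsRootedRegion A o t) (hsub : T ⊆ A)
    (hxor : ∀ p ∈ T, p ≠ (o, t) → Xor (HasPointAbove T p) (HasPointLeft T p))
    (hcross : ∀ p ∈ A, p ∉ T → ¬(HasPointAbove T p ∧ HasPointLeft T p)) :
    IsNoncrossing A T := by
  intro p hp hboth
  have hne : p ≠ (o, t) := by
    rintro rfl
    obtain ⟨b, htb, hb⟩ := hboth.1
    exact (hA.le_top _ (hsub hb)).not_gt htb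
  by_cases hpT : p ∈ T
  · exact ((xor_iff_or_and_not_and _ _).1 (hxor p hpT hne)).2 hboth
  · exact hcross p hp hpT hboth

theorem nuTree_iff_noncrossing_treelike_general (hA : IsRootedRegion A o t) (hsub : T ⊆ A) :
    IsRegionTree A T ↔
      ((o, t) ∈ T ∧
       (∀ p ∈ T, p ≠ (o, t) → Xor (HasPointAbove T p) (HasPointLeft T p)) ∧
       (∀ y, (o, y) ∈ A → ∃ x, (x, y) ∈ T) ∧
       (∀ x, (x, t) ∈ A → ∃ y, (x, y) ∈ T) ∧
       (∀ p ∈ A, p ∉ T → ¬(HasPointAbove T p ∧ HasPointLeft T p))) := by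
  constructor
  · intro hT
    have hS := hT.isSpanning hA
    refine ⟨hS.root_mem, fun p hp hne => ?_, fun _ => hS.exists_mem_row,
      fun _ => hS.exists_mem_column, fun p hp _ => hT.isNoncrossing p hp⟩
    exact (xor_iff_or_and_not_and _ _).2
      ⟨hS.hasPointAbove_or_hasPointLeft hA hsub hT.isNoncrossing hp hne,
        hT.isNoncrossing p (hsub hp)⟩
  · rintro ⟨hroot, hxor, hrow, hcol, hcross⟩
    have hS : IsSpanning A T o t := .of_hasPointAbove_or_hasPointLeft (hA.finite.subset hsub) hroot
      (fun p hp hne => (hxor p hp hne).or) hrow hcol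
    exact hS.isRegionTree hA hsub (.of_xor hA hsub hxor hcross)

end Region

theorem zero_mk_mem_APts {ν : List Bool} {y : ℕ} : (0, y) ∈ APts ν ↔ y ≤ northSteps ν := by
  simp [APts, heightAt_zero]

theorem mk_northSteps_mem_APts {ν : List Bool} {x : ℕ} :
    (x, northSteps ν) ∈ APts ν ↔ x ≤ eastSteps ν := by
  simp [APts, heightAt_le_northSteps]

theorem isRootedRegion_APts (ν : List Bool) : IsRootedRegion (APts ν) 0 (northSteps ν) where
  finite := (Set.finite_Iic (eastSteps ν, northSteps ν)).subset fun _ hp => ⟨hp.1, hp.2.2⟩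
  root_mem := zero_mk_mem_APts.2 le_rfl
  left_le p _ := Nat.zero_le p.1
  le_top _ hp := hp.2.2
  left_mem _ hp := zero_mk_mem_APts.2 hp.2.2
  top_mem _ hp := mk_northSteps_mem_APts.2 hp.1

theorem isNuTree_iff_isRegionTree {ν : List Bool} {T : Set (ℕ × ℕ)} :
    IsNuTree ν T ↔ IsRegionTree (APts ν) T := by
  constructor
  · rintro ⟨hsub, hT, hmax⟩
    exact ⟨⟨hsub, hT⟩, fun S hS hTS => (hmax S hS.1 hS.2 hTS).le⟩
  · intro hT
    exact ⟨hT.prop.1, hT.prop.2, fun S hSA hS hTS => (hT.eq_of_subset ⟨hSA, hS⟩ hTS).symm⟩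

theorem nuTree_iff_noncrossing_treelike (ν : List Bool) (T : Set (ℕ × ℕ))
    (hsub : T ⊆ APts ν) :
    IsNuTree ν T ↔
      ((0, northSteps ν) ∈ T ∧
       (∀ p ∈ T, p ≠ (0, northSteps ν) →
         Xor' (∃ b, p.2 < b ∧ (p.1, b) ∈ T) (∃ a, a < p.1 ∧ (a, p.2) ∈ T)) ∧
       (∀ y ≤ northSteps ν, ∃ x, (x, y) ∈ T) ∧
       (∀ x ≤ eastSteps ν, ∃ y, (x, y) ∈ T) ∧
       (∀ p ∈ APts ν, p ∉ T →
         ¬((∃ b, p.2 < b ∧ (p.1, b) ∈ T) ∧ (∃ a, a < p.1 ∧ (a, p.2) ∈ T)))) := by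
  rw [isNuTree_iff_isRegionTree,
    nuTree_iff_noncrossing_treelike_general (isRootedRegion_APts ν) hsub]
  simp only [zero_mk_mem_APts, mk_northSteps_mem_APts]
  exact Iff.rfl
end
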